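/- arXiv:2005.09686 — 6 statements merged into one kernel-verified Lean document; each statement's English description precedes it below -/
import Mathlib

section
/- With respect to the canonical Poisson bracket on ℝ⁴, the invariants τ₁ = (x₁²+y₁²)/2, τ₂ = (x₂²+y₂²)/2, σ₁ = ((x₁²−y₁²)x₂ + 2x₁y₁y₂)/2, σ₂ = (2x₁y₁x₂ − (x₁²−y₁²)y₂)/2 satisfy the bracket relations {τ₁,τ₂} = 0, {τ₁,σ₁} = −2σ₂, {τ₁,σ₂} = 2σ₁, {τ₂,σ₁} = σ₂, {τ₂,σ₂} = −σ₁, and {σ₁,σ₂} = 4τ₁τ₂ − τ₁². -/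
/-- The canonical Poisson bracket on `ℝ⁴` with coordinates `(x₁, y₁, x₂, y₂)`. -/
noncomputable def poissonBracket (f g : ℝ → ℝ → ℝ → ℝ → ℝ)
    (x₁ y₁ x₂ y₂ : ℝ) : ℝ :=
  deriv (fun t => f t y₁ x₂ y₂) x₁ * deriv (fun t => g x₁ t x₂ y₂) y₁
    - deriv (fun t => f x₁ t x₂ y₂) y₁ * deriv (fun t => g t y₁ x₂ y₂) x₁
    + deriv (fun t => f x₁ y₁ t y₂) x₂ * deriv (fun t => g x₁ y₁ x₂ t) y₂
    - deriv (fun t => f x₁ y₁ x₂ t) y₂ * deriv (fun t => g x₁ y₁ t y₂) x₂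

/-- The invariant `τ₁ = (x₁² + y₁²)/2`. -/
noncomputable def invTau₁ (x₁ y₁ _x₂ _y₂ : ℝ) : ℝ := (x₁ ^ 2 + y₁ ^ 2) / 2

/-- The invariant `τ₂ = (x₂² + y₂²)/2`. -/
noncomputable def invTau₂ (_x₁ _y₁ x₂ y₂ : ℝ) : ℝ := (x₂ ^ 2 + y₂ ^ 2) / 2

/-- The invariant `σ₁ = ((x₁² − y₁²)x₂ + 2x₁y₁y₂)/2`. -/
noncomputable def invSigma₁ (x₁ y₁ x₂ y₂ : ℝ) : ℝ := ((x₁ ^ 2 - y₁ ^ 2) * x₂ + 2 * x₁ * y₁ * y₂) / 2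

/-- The invariant `σ₂ = (2x₁y₁x₂ − (x₁² − y₁²)y₂)/2`. -/
noncomputable def invSigma₂ (x₁ y₁ x₂ y₂ : ℝ) : ℝ := (2 * x₁ * y₁ * x₂ - (x₁ ^ 2 - y₁ ^ 2) * y₂) / 2

/-!
The Hamiltonian vector field of `τⱼ` is the rotation `xⱼ ∂/∂yⱼ - yⱼ ∂/∂xⱼ` of the `zⱼ`-plane, where
`zⱼ = xⱼ + i yⱼ`. Under these rotations `F = σ₁ + i σ₂ = z₁² z̄₂ / 2` has weights `2` and `-1`, that
is, `{τ₁, F} = 2 i F` and `{τ₂, F} = -i F`. Since `F` is holomorphic in `z₁` and antiholomorphic in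
`z₂`, its Jacobians in the two planes are `|∂F/∂z₁|²` and `-|∂F/∂z̄₂|²`, and their sum is
`{σ₁, σ₂} = |z₁ z̄₂|² - |z₁² / 2|² = 4 τ₁ τ₂ - τ₁²`.
-/

theorem hasDerivAt_of_forall_eq_quadratic {𝕜 : Type*} [NontriviallyNormedField 𝕜] {f : 𝕜 → 𝕜}
    {f' x : 𝕜} (a : 𝕜) (hf : ∀ t, f t = f x + f' * (t - x) + a * (t - x) ^ 2) :
    HasDerivAt f f' x := by
  have hsub : HasDerivAt (fun t => t - x) 1 x := (hasDerivAt_id' x).sub_const x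
  rw [funext hf]
  simpa using ((hsub.const_mul f').const_add (f x)).fun_add ((hsub.fun_pow 2).const_mul a)

/-- `HasPartialDerivs f a b c d x₁ y₁ x₂ y₂`: the partial derivatives of `f` are `a`, `b`, `c`, `d`
with respect to `x₁`, `y₁`, `x₂`, `y₂` at the point `(x₁, y₁, x₂, y₂)`. Only partial
differentiability is required, which is all that `poissonBracket` refers to. -/
structure HasPartialDerivs (f : ℝ → ℝ → ℝ → ℝ → ℝ) (a b c d x₁ y₁ x₂ y₂ : ℝ) : Prop where
  hasDerivAt_x₁ : HasDerivAt (fun t => f t y₁ x₂ y₂) a x₁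
  hasDerivAt_y₁ : HasDerivAt (fun t => f x₁ t x₂ y₂) b y₁
  hasDerivAt_x₂ : HasDerivAt (fun t => f x₁ y₁ t y₂) c x₂
  hasDerivAt_y₂ : HasDerivAt (fun t => f x₁ y₁ x₂ t) d y₂

section

variable {f g : ℝ → ℝ → ℝ → ℝ → ℝ} {a b c d a' b' c' d' x₁ y₁ x₂ y₂ : ℝ}

theorem HasPartialDerivs.poissonBracket_eq (hf : HasPartialDerivs f a b c d x₁ y₁ x₂ y₂)
    (hg : HasPartialDerivs g a' b' c' d' x₁ y₁ x₂ y₂) :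
    poissonBracket f g x₁ y₁ x₂ y₂ = a * b' - b * a' + c * d' - d * c' := by
  rw [poissonBracket, hf.hasDerivAt_x₁.deriv, hf.hasDerivAt_y₁.deriv, hf.hasDerivAt_x₂.deriv,
    hf.hasDerivAt_y₂.deriv, hg.hasDerivAt_x₁.deriv, hg.hasDerivAt_y₁.deriv,
    hg.hasDerivAt_x₂.deriv, hg.hasDerivAt_y₂.deriv]

-- The hypotheses are the Cauchy–Riemann equations for `F = f + i g` holomorphic in `z₁` and
-- antiholomorphic in `z₂`, with `∂F/∂z₁ = a + i b` and `∂F/∂z̄₂ = c + i d`.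
theorem HasPartialDerivs.poissonBracket_eq_of_cauchyRiemann
    (hf : HasPartialDerivs f a (-b) c d x₁ y₁ x₂ y₂)
    (hg : HasPartialDerivs g b a d (-c) x₁ y₁ x₂ y₂) :
    poissonBracket f g x₁ y₁ x₂ y₂ = (a ^ 2 + b ^ 2) - (c ^ 2 + d ^ 2) := by
  rw [hf.poissonBracket_eq hg]
  ring

theorem hasPartialDerivs_invTau₁ (x₁ y₁ x₂ y₂ : ℝ) :
    HasPartialDerivs invTau₁ x₁ y₁ 0 0 x₁ y₁ x₂ y₂ where
  hasDerivAt_x₁ := hasDerivAt_of_forall_eq_quadratic (1 / 2) fun t => by unfold invTau₁; ring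
  hasDerivAt_y₁ := hasDerivAt_of_forall_eq_quadratic (1 / 2) fun t => by unfold invTau₁; ring
  hasDerivAt_x₂ := hasDerivAt_const x₂ _
  hasDerivAt_y₂ := hasDerivAt_const y₂ _

theorem hasPartialDerivs_invTau₂ (x₁ y₁ x₂ y₂ : ℝ) :
    HasPartialDerivs invTau₂ 0 0 x₂ y₂ x₁ y₁ x₂ y₂ where
  hasDerivAt_x₁ := hasDerivAt_const x₁ _
  hasDerivAt_y₁ := hasDerivAt_const y₁ _
  hasDerivAt_x₂ := hasDerivAt_of_forall_eq_quadratic (1 / 2) fun t => by unfold invTau₂; ring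
  hasDerivAt_y₂ := hasDerivAt_of_forall_eq_quadratic (1 / 2) fun t => by unfold invTau₂; ring

theorem hasPartialDerivs_invSigma₁ (x₁ y₁ x₂ y₂ : ℝ) :
    HasPartialDerivs invSigma₁ (x₁ * x₂ + y₁ * y₂) (-(y₁ * x₂ - x₁ * y₂))
      ((x₁ ^ 2 - y₁ ^ 2) / 2) (x₁ * y₁) x₁ y₁ x₂ y₂ where
  hasDerivAt_x₁ := hasDerivAt_of_forall_eq_quadratic (x₂ / 2) fun t => by unfold invSigma₁; ring
  hasDerivAt_y₁ := hasDerivAt_of_forall_eq_quadratic (-x₂ / 2) fun t => by unfold invSigma₁; ring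
  hasDerivAt_x₂ := hasDerivAt_of_forall_eq_quadratic 0 fun t => by unfold invSigma₁; ring
  hasDerivAt_y₂ := hasDerivAt_of_forall_eq_quadratic 0 fun t => by unfold invSigma₁; ring

theorem hasPartialDerivs_invSigma₂ (x₁ y₁ x₂ y₂ : ℝ) :
    HasPartialDerivs invSigma₂ (y₁ * x₂ - x₁ * y₂) (x₁ * x₂ + y₁ * y₂)
      (x₁ * y₁) (-((x₁ ^ 2 - y₁ ^ 2) / 2)) x₁ y₁ x₂ y₂ where
  hasDerivAt_x₁ := hasDerivAt_of_forall_eq_quadratic (-y₂ / 2) fun t => by unfold invSigma₂; ring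
  hasDerivAt_y₁ := hasDerivAt_of_forall_eq_quadratic (y₂ / 2) fun t => by unfold invSigma₂; ring
  hasDerivAt_x₂ := hasDerivAt_of_forall_eq_quadratic 0 fun t => by unfold invSigma₂; ring
  hasDerivAt_y₂ := hasDerivAt_of_forall_eq_quadratic 0 fun t => by unfold invSigma₂; ring

theorem HasPartialDerivs.poissonBracket_invTau₁ (hg : HasPartialDerivs g a b c d x₁ y₁ x₂ y₂) :
    poissonBracket invTau₁ g x₁ y₁ x₂ y₂ = x₁ * b - y₁ * a := by
  rw [(hasPartialDerivs_invTau₁ x₁ y₁ x₂ y₂).poissonBracket_eq hg]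
  ring

theorem HasPartialDerivs.poissonBracket_invTau₂ (hg : HasPartialDerivs g a b c d x₁ y₁ x₂ y₂) :
    poissonBracket invTau₂ g x₁ y₁ x₂ y₂ = x₂ * d - y₂ * c := by
  rw [(hasPartialDerivs_invTau₂ x₁ y₁ x₂ y₂).poissonBracket_eq hg]
  ring

end

/-- The Poisson bracket relations among the invariants `τ₁, τ₂, σ₁, σ₂`:
`{τ₁,τ₂} = 0`, `{τ₁,σ₁} = −2σ₂`, `{τ₁,σ₂} = 2σ₁`, `{τ₂,σ₁} = σ₂`,
`{τ₂,σ₂} = −σ₁` and `{σ₁,σ₂} = 4τ₁τ₂ − τ₁²`. -/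
theorem invariants_poisson_relations (x₁ y₁ x₂ y₂ : ℝ) :
    poissonBracket invTau₁ invTau₂ x₁ y₁ x₂ y₂ = 0 ∧
    poissonBracket invTau₁ invSigma₁ x₁ y₁ x₂ y₂ = -2 * invSigma₂ x₁ y₁ x₂ y₂ ∧
    poissonBracket invTau₁ invSigma₂ x₁ y₁ x₂ y₂ = 2 * invSigma₁ x₁ y₁ x₂ y₂ ∧
    poissonBracket invTau₂ invSigma₁ x₁ y₁ x₂ y₂ = invSigma₂ x₁ y₁ x₂ y₂ ∧
    poissonBracket invTau₂ invSigma₂ x₁ y₁ x₂ y₂ = -invSigma₁ x₁ y₁ x₂ y₂ ∧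
    poissonBracket invSigma₁ invSigma₂ x₁ y₁ x₂ y₂
      = 4 * invTau₁ x₁ y₁ x₂ y₂ * invTau₂ x₁ y₁ x₂ y₂ - (invTau₁ x₁ y₁ x₂ y₂) ^ 2 := by
  have hτ₂ := hasPartialDerivs_invTau₂ x₁ y₁ x₂ y₂
  have hσ₁ := hasPartialDerivs_invSigma₁ x₁ y₁ x₂ y₂
  have hσ₂ := hasPartialDerivs_invSigma₂ x₁ y₁ x₂ y₂
  rw [hτ₂.poissonBracket_invTau₁, hσ₁.poissonBracket_invTau₁, hσ₂.poissonBracket_invTau₁,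
    hσ₁.poissonBracket_invTau₂, hσ₂.poissonBracket_invTau₂,
    hσ₁.poissonBracket_eq_of_cauchyRiemann hσ₂]
  unfold invTau₁ invTau₂ invSigma₁ invSigma₂
  refine ⟨?_, ?_, ?_, ?_, ?_, ?_⟩ <;> ring
end

section
/- For every η ≥ 0, the Hilbert map of invariants is onto the once-reduced phase space: for every (t, s₁, s₂) ∈ ℝ³ with 0 ≤ t ≤ η and (η − t)·t² = s₁² + s₂², there exists (z₁,z₂) ∈ ℂ² with |z₁|²/2 = t, |z₁|²/2 + |z₂|² = η (i.e. H₀ = η), Re(z₁²·conj(z₂))/2 = s₁ and Im(z₁²·conj(z₂))/2 = s₂. -/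
/-!
The norms of `z₁` and `z₂` are prescribed by `t` and `η`, and the syzygy says that
`w = 2 (s₁ + i s₂)` has exactly the norm `‖z₁‖² ‖z₂‖` that `z₁² z̄₂` must have. Only the
phase of `w` remains to be matched, and it can be put entirely into `z₂`.
-/

open ComplexConjugate in
theorem exists_norm_eq_and_pow_mul_conj_eq {𝕜 : Type*} [RCLike 𝕜] {n : ℕ} {a b : ℝ} {w : 𝕜}
    (ha : 0 ≤ a) (hb : 0 ≤ b) (hw : ‖w‖ = a ^ n * b) :
    ∃ u v : 𝕜, ‖u‖ = a ∧ ‖v‖ = b ∧ u ^ n * conj v = w := by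
  obtain ⟨c, hc, hcw⟩ := RCLike.exists_norm_mul_eq_self w
  refine ⟨a, b * conj c, RCLike.norm_of_nonneg ha, ?_, ?_⟩
  · rw [norm_mul, RCLike.norm_conj, hc, mul_one, RCLike.norm_of_nonneg hb]
  · calc (a : 𝕜) ^ n * conj (b * conj c) = c * ((a ^ n * b : ℝ) : 𝕜) := by
          simp only [map_mul, RCLike.conj_ofReal, RCLike.conj_conj]
          push_cast
          ring
      _ = w := by rw [← hw, hcw]

/-- For `η ≥ 0`, the Hilbert map of invariants is onto the once-reduced phase
space `V^η`: every `(t, s₁, s₂)` with `0 ≤ t ≤ η` and `(η − t) t² = s₁² + s₂²`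
is attained by some `(z₁, z₂) ∈ ℂ²` with `H₀ = |z₁|²/2 + |z₂|² = η`. -/
theorem hilbert_map_surjective (η : ℝ) (hη : 0 ≤ η) (t s₁ s₂ : ℝ)
    (ht₀ : 0 ≤ t) (htη : t ≤ η) (hsyz : (η - t) * t ^ 2 = s₁ ^ 2 + s₂ ^ 2) :
    ∃ z₁ z₂ : ℂ,
      ‖z₁‖ ^ 2 / 2 = t ∧
      ‖z₁‖ ^ 2 / 2 + ‖z₂‖ ^ 2 = η ∧
      (z₁ ^ 2 * (starRingEnd ℂ) z₂).re / 2 = s₁ ∧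
      (z₁ ^ 2 * (starRingEnd ℂ) z₂).im / 2 = s₂ := by
  have ha : √(2 * t) ^ 2 = 2 * t := Real.sq_sqrt (by positivity)
  have hb : √(η - t) ^ 2 = η - t := Real.sq_sqrt (sub_nonneg.2 htη)
  have hw : ‖(⟨2 * s₁, 2 * s₂⟩ : ℂ)‖ = √(2 * t) ^ 2 * √(η - t) := by
    rw [← sq_eq_sq₀ (norm_nonneg _) (by positivity), Complex.sq_norm, Complex.normSq_mk,
      mul_pow, ha, hb]
    linear_combination -4 * hsyz
  obtain ⟨z₁, z₂, hz₁, hz₂, hz⟩ :=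
    exists_norm_eq_and_pow_mul_conj_eq (Real.sqrt_nonneg _) (Real.sqrt_nonneg _) hw
  rw [← hz₁] at ha
  rw [← hz₂] at hb
  refine ⟨z₁, z₂, by linarith, by linarith, ?_, ?_⟩
  · rw [hz, mul_div_cancel_left₀ _ two_ne_zero]
  · rw [hz, mul_div_cancel_left₀ _ two_ne_zero]
end

section
/- For every η ≥ 0, the second reduction map is onto P^η: for every (u,v,w) ∈ ℝ³ with 0 ≤ u ≤ η and S^η(u,v,w) = 0 there exist (σ₁,σ₂) ∈ ℝ² with (η−u)u² = σ₁² + σ₂², (σ₁² − σ₂²)/2 = v and σ₁σ₂ = w; in particular (u,σ₁,σ₂) lies in V^η and is mapped to (u,v,w). -/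
/-!
With `z = σ₁ + i σ₂`, the second reduction map is complex squaring: `2 (v + i w) = z ^ 2`, while the
equation of `V^η` reads `(η - u) u² = |z|²`. So `(σ₁, σ₂)` is found as a complex square root of
`2 (v + i w)`, and `S^η = 0` says exactly that the modulus of `2 (v + i w)` is `(η - u) u²`.
-/

theorem exists_complex_sq_eq_and_normSq_eq_norm (c : ℂ) :
    ∃ z : ℂ, z ^ 2 = c ∧ Complex.normSq z = ‖c‖ := by
  obtain ⟨z, rfl⟩ := IsAlgClosed.exists_pow_nat_eq c two_pos
  exact ⟨z, rfl, by rw [Complex.normSq_eq_norm_sq, norm_pow]⟩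

theorem exists_sq_add_sq_eq_and_sq_sub_sq_eq_and_two_mul_mul_eq {r a b : ℝ} (hr : 0 ≤ r)
    (h : a ^ 2 + b ^ 2 = r ^ 2) :
    ∃ x y : ℝ, x ^ 2 + y ^ 2 = r ∧ x ^ 2 - y ^ 2 = a ∧ 2 * x * y = b := by
  obtain ⟨z, hz_sq, hz_normSq⟩ := exists_complex_sq_eq_and_normSq_eq_norm ⟨a, b⟩
  have hnorm : ‖(⟨a, b⟩ : ℂ)‖ = r := by
    rw [Complex.norm_eq_sqrt_sq_add_sq, h, Real.sqrt_sq hr]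
  have hre : z.re * z.re - z.im * z.im = a := by
    simpa [sq] using congrArg Complex.re hz_sq
  have him : z.re * z.im + z.im * z.re = b := by
    simpa [sq] using congrArg Complex.im hz_sq
  rw [hnorm, Complex.normSq_apply] at hz_normSq
  exact ⟨z.re, z.im, by linarith, by linarith, by linarith⟩

theorem second_reduction_surjective_general {η u v w : ℝ} (huη : u ≤ η)
    (hS : (η - u) ^ 2 * u ^ 4 / 2 - 2 * (v ^ 2 + w ^ 2) = 0) :
    ∃ σ₁ σ₂ : ℝ,
      (η - u) * u ^ 2 = σ₁ ^ 2 + σ₂ ^ 2 ∧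
      (σ₁ ^ 2 - σ₂ ^ 2) / 2 = v ∧
      σ₁ * σ₂ = w := by
  have hradius : 0 ≤ (η - u) * u ^ 2 := mul_nonneg (sub_nonneg.2 huη) (sq_nonneg u)
  have hcone : (2 * v) ^ 2 + (2 * w) ^ 2 = ((η - u) * u ^ 2) ^ 2 := by
    linear_combination -2 * hS
  obtain ⟨σ₁, σ₂, hadd, hsub, hmul⟩ :=
    exists_sq_add_sq_eq_and_sq_sub_sq_eq_and_two_mul_mul_eq hradius hcone
  exact ⟨σ₁, σ₂, hadd.symm, by linarith, by linarith⟩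

/-- For `η ≥ 0` the second reduction map is onto `P^η`: for every `(u,v,w)`
with `0 ≤ u ≤ η` and `S^η(u,v,w) = (η−u)²u⁴/2 − 2(v²+w²) = 0` there exist
`(σ₁, σ₂) ∈ ℝ²` with `(η−u)u² = σ₁² + σ₂²`, `(σ₁² − σ₂²)/2 = v` and
`σ₁σ₂ = w`; in particular `(u, σ₁, σ₂)` lies in `V^η` and maps to `(u,v,w)`. -/
theorem second_reduction_surjective (η u v w : ℝ) (hη : 0 ≤ η)
    (h₀ : 0 ≤ u) (huη : u ≤ η)
    (hS : (η - u) ^ 2 * u ^ 4 / 2 - 2 * (v ^ 2 + w ^ 2) = 0) :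
    ∃ σ₁ σ₂ : ℝ,
      (η - u) * u ^ 2 = σ₁ ^ 2 + σ₂ ^ 2 ∧
      (σ₁ ^ 2 - σ₂ ^ 2) / 2 = v ∧
      σ₁ * σ₂ = w :=
  second_reduction_surjective_general huη hS
end

section
/- Let η > 0, δ, α ∈ ℝ, λ ≠ 0, set u₀ = −(2δ + αη)/(2λ) and K(u,v,w) = (2δ + αη)u + λu². If u₀ ∉ [0,η], then the level set of K through each singular point meets P^η only in that point: {p ∈ P^η : K(p) = K(Q₁)} = {Q₁} and {p ∈ P^η : K(p) = K(Q₂)} = {Q₂}, where Q₁ = (0,0,0) and Q₂ = (η,0,0). (Hence both normal modes are stable outside the closure of the set D_λ^α.) -/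
/-- The defining function `S^η(u,v,w) = (η−u)²u⁴/2 − 2(v² + w²)` of the
twice-reduced phase space. -/
noncomputable def Sred (η : ℝ) (p : ℝ × ℝ × ℝ) : ℝ :=
  (η - p.1) ^ 2 * p.1 ^ 4 / 2 - 2 * (p.2.1 ^ 2 + p.2.2 ^ 2)

/-!
`P^η` is the surface of revolution `v² + w² = ((η − u)u²/2)²` about the `u`-axis over
`0 ≤ u ≤ η`, pinched at `Q₁` and `Q₂`, where the radius vanishes. Two distinct points of the line
with the same value of `K` have the vertex `u₀` as their midpoint, so `K` is injective on `[0, η]`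
as soon as `u₀ ∉ [0, η]`. Each nonempty level set of `K` on `P^η` is then a single circle of
revolution, and the circles at `u = 0` and `u = η` are points.
-/

theorem midpoint_eq_vertex_of_quadratic_eq {𝕜 : Type*} [Field 𝕜] [Invertible (2 : 𝕜)]
    {a l x y : 𝕜} (hl : l ≠ 0) (hxy : x ≠ y) (h : a * x + l * x ^ 2 = a * y + l * y ^ 2) :
    midpoint 𝕜 x y = -a / (2 * l) := by
  have h_two : (2 : 𝕜) ≠ 0 := Invertible.ne_zero 2
  have vanishing_factor : a + l * (x + y) = 0 := by
    apply mul_left_cancel₀ (sub_ne_zero.mpr hxy)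
    linear_combination h
  rw [midpoint_eq_smul_add, smul_eq_mul, invOf_eq_inv]
  field_simp
  linear_combination vanishing_factor

theorem injOn_quadratic_of_vertex_notMem {𝕜 : Type*} [Field 𝕜] [LinearOrder 𝕜]
    [IsStrictOrderedRing 𝕜] {s : Set 𝕜} (hs : Convex 𝕜 s) {a l : 𝕜} (hl : l ≠ 0)
    (hvertex : -a / (2 * l) ∉ s) : Set.InjOn (fun u => a * u + l * u ^ 2) s := by
  intro x hx y hy hxy
  by_contra hne
  have : Invertible (2 : 𝕜) := invertibleOfNonzero two_ne_zero
  apply hvertex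
  rw [← midpoint_eq_vertex_of_quadratic_eq hl hne hxy]
  exact hs.midpoint_mem hx hy

theorem sred_eq_zero_iff {η : ℝ} {p : ℝ × ℝ × ℝ} :
    Sred η p = 0 ↔ p.2.1 ^ 2 + p.2.2 ^ 2 = ((η - p.1) * p.1 ^ 2 / 2) ^ 2 := by
  rw [Sred]
  constructor <;> intro h
  · linear_combination -h / 2
  · linear_combination -2 * h

/-- The twice-reduced phase space `P^η`, in coordinates `(u, v, w)`; the bounds on `u` select the
compact part of the zero set of `S^η`. -/
def reducedPhaseSpace (η : ℝ) : Set (ℝ × ℝ × ℝ) :=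
  {p | Sred η p = 0 ∧ p.1 ∈ Set.Icc 0 η}

section LevelSets

variable {β : Type*} {f : ℝ → β} {η u : ℝ}

theorem reducedPhaseSpace_levelSet_eq_circle (hf : Set.InjOn f (Set.Icc 0 η))
    (hu : u ∈ Set.Icc 0 η) :
    {p ∈ reducedPhaseSpace η | f p.1 = f u} =
      {p | p.1 = u ∧ p.2.1 ^ 2 + p.2.2 ^ 2 = ((η - u) * u ^ 2 / 2) ^ 2} := by
  ext ⟨x, v, w⟩
  constructor
  · rintro ⟨⟨hS, hx⟩, hfx⟩
    obtain rfl : x = u := hf hx hu hfx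
    exact ⟨rfl, sred_eq_zero_iff.mp hS⟩
  · rintro ⟨rfl, hcircle⟩
    exact ⟨⟨sred_eq_zero_iff.mpr hcircle, hu⟩, rfl⟩

theorem reducedPhaseSpace_levelSet_eq_singleton (hf : Set.InjOn f (Set.Icc 0 η))
    (hu : u ∈ Set.Icc 0 η) (hradius : (η - u) * u ^ 2 = 0) :
    {p ∈ reducedPhaseSpace η | f p.1 = f u} = {(u, 0, 0)} := by
  rw [reducedPhaseSpace_levelSet_eq_circle hf hu, hradius]
  ext ⟨x, v, w⟩
  simp [add_eq_zero_iff_of_nonneg, sq_nonneg]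

end LevelSets

/-- For `K = (2δ + αη)u + λu²` with `u₀ = −(2δ + αη)/(2λ) ∉ [0,η]`, the level
set of `K` through each singular point `Q₁ = (0,0,0)`, `Q₂ = (η,0,0)` meets
`P^η` only in that point — hence both normal modes are stable outside the
closure of `D_λ^α`. -/
theorem normal_modes_stable_outside (η δ α l : ℝ) (hη : 0 < η) (hl : l ≠ 0)
    (hu₀ : -(2 * δ + α * η) / (2 * l) ∉ Set.Icc 0 η) :
    {p : ℝ × ℝ × ℝ | Sred η p = 0 ∧ 0 ≤ p.1 ∧ p.1 ≤ η ∧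
        (2 * δ + α * η) * p.1 + l * p.1 ^ 2
          = (2 * δ + α * η) * (0 : ℝ) + l * (0 : ℝ) ^ 2}
      = {((0 : ℝ), (0 : ℝ), (0 : ℝ))} ∧
    {p : ℝ × ℝ × ℝ | Sred η p = 0 ∧ 0 ≤ p.1 ∧ p.1 ≤ η ∧
        (2 * δ + α * η) * p.1 + l * p.1 ^ 2
          = (2 * δ + α * η) * η + l * η ^ 2}
      = {(η, (0 : ℝ), (0 : ℝ))} := by
  have hK : Set.InjOn (fun u => (2 * δ + α * η) * u + l * u ^ 2) (Set.Icc 0 η) :=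
    injOn_quadratic_of_vertex_notMem (convex_Icc 0 η) hl hu₀
  have hQ₁ := reducedPhaseSpace_levelSet_eq_singleton hK (Set.left_mem_Icc.mpr hη.le) (by ring)
  have hQ₂ := reducedPhaseSpace_levelSet_eq_singleton hK (Set.right_mem_Icc.mpr hη.le) (by ring)
  simp only [reducedPhaseSpace, Set.mem_ofPred_eq, Set.mem_Icc, and_assoc] at hQ₁ hQ₂
  exact ⟨hQ₁, hQ₂⟩
end

section
/- Let η > 0, let f : ℝ → ℝ be differentiable, let c ≠ 0, let K(u,v,w) = f(u) + c·v, and let s ∈ {+1,−1}. Then the point p = (u, s·(η−u)u²/2, 0) ∈ P^η with 0 < u < η is an equilibrium of the reduced vector field X_K = ∇K × ∇S^η if and only if f′(u) = −s·c·u(2η − 3u)/2; equivalently, if and only if the slope of the level curve of K coincides with the slope of the contour v = s(η−u)u²/2 of P^η at u (tangency condition). -/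
/-- The gradient of a function on `ℝ³ = ℝ × ℝ × ℝ`, computed coordinatewise. -/
noncomputable def grad3 (f : ℝ × ℝ × ℝ → ℝ) (p : ℝ × ℝ × ℝ) : ℝ × ℝ × ℝ :=
  (deriv (fun t => f (t, p.2.1, p.2.2)) p.1,
   deriv (fun t => f (p.1, t, p.2.2)) p.2.1,
   deriv (fun t => f (p.1, p.2.1, t)) p.2.2)

/-- The cross product on `ℝ³ = ℝ × ℝ × ℝ`. -/
def cross3 (a b : ℝ × ℝ × ℝ) : ℝ × ℝ × ℝ :=
  (a.2.1 * b.2.2 - a.2.2 * b.2.1,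
   a.2.2 * b.1 - a.1 * b.2.2,
   a.1 * b.2.1 - a.2.1 * b.1)

lemma cross3_planar_eq_zero_iff {a b a' b' : ℝ} :
    cross3 (a, b, 0) (a', b', 0) = 0 ↔ a * b' = b * a' := by
  simp [cross3, sub_eq_zero]

lemma grad3_eq_of_hasDerivAt {F : ℝ × ℝ × ℝ → ℝ} {x y z a b c : ℝ}
    (hx : HasDerivAt (fun t => F (t, y, z)) a x)
    (hy : HasDerivAt (fun t => F (x, t, z)) b y)
    (hz : HasDerivAt (fun t => F (x, y, t)) c z) :
    grad3 F (x, y, z) = (a, b, c) := by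
  simp only [grad3, hx.deriv, hy.deriv, hz.deriv]

lemma grad3_add_fst_snd {f g : ℝ → ℝ} {f' g' u v : ℝ}
    (hf : HasDerivAt f f' u) (hg : HasDerivAt g g' v) (w : ℝ) :
    grad3 (fun q => f q.1 + g q.2.1) (u, v, w) = (f', g', 0) :=
  grad3_eq_of_hasDerivAt (hf.add_const (g v)) (hg.const_add (f u)) (hasDerivAt_const w (f u + g v))

/-- The function `k (ρ(u)² - v² - w²)`, whose zero set for `k ≠ 0` is the surface obtained by
rotating the meridian `v = ρ(u)` about the `u`-axis. -/
def revolutionFun (k : ℝ) (ρ : ℝ → ℝ) (p : ℝ × ℝ × ℝ) : ℝ :=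
  k * (ρ p.1 ^ 2 - p.2.1 ^ 2 - p.2.2 ^ 2)

lemma grad3_revolutionFun (k : ℝ) {ρ : ℝ → ℝ} {ρ' u : ℝ} (hρ : HasDerivAt ρ ρ' u) (v w : ℝ) :
    grad3 (revolutionFun k ρ) (u, v, w) =
      (2 * k * ρ u * ρ', -2 * k * v, -2 * k * w) := by
  have hsq (x : ℝ) : HasDerivAt (fun t => t ^ 2) (2 * x) x := by
    simpa using hasDerivAt_pow 2 x
  refine grad3_eq_of_hasDerivAt ?_ ?_ ?_
  · exact ((((hρ.pow 2).sub_const (v ^ 2)).sub_const (w ^ 2)).const_mul k).congr_deriv (by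
      push_cast; ring)
  · exact ((((hsq v).const_sub (ρ u ^ 2)).sub_const (w ^ 2)).const_mul k).congr_deriv (by ring)
  · exact (((hsq w).const_sub (ρ u ^ 2 - v ^ 2)).const_mul k).congr_deriv (by ring)

theorem tangency_condition_general {k : ℝ} (hk : k ≠ 0) {f g ρ : ℝ → ℝ} {f' g' ρ' s u : ℝ}
    (hs : s = 1 ∨ s = -1) (hρu : ρ u ≠ 0) (hf : HasDerivAt f f' u)
    (hg : HasDerivAt g g' (s * ρ u)) (hρ : HasDerivAt ρ ρ' u) :
    cross3
        (grad3 (fun q => f q.1 + g q.2.1) (u, s * ρ u, 0))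
        (grad3 (revolutionFun k ρ) (u, s * ρ u, 0)) = 0
      ↔ f' = -s * g' * ρ' := by
  have hkρ : 2 * k * ρ u ≠ 0 := mul_ne_zero (mul_ne_zero two_ne_zero hk) hρu
  rw [grad3_add_fst_snd hf hg, grad3_revolutionFun k hρ, mul_zero, cross3_planar_eq_zero_iff]
  calc f' * (-2 * k * (s * ρ u)) = g' * (2 * k * ρ u * ρ')
      ↔ 2 * k * ρ u * (-s * f') = 2 * k * ρ u * (g' * ρ') := by ring_nf
    _ ↔ -s * f' = g' * ρ' := mul_right_inj' hkρ
    _ ↔ f' = -s * g' * ρ' := by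
      rcases hs with rfl | rfl <;> constructor <;> intro h <;> linarith

/-- The contour radius `ρ(u) = (η - u) u² / 2` of the twice-reduced phase space `P^η`, whose section
by `w = 0` is `v = ± ρ(u)`. -/
noncomputable def contourRadius (η u : ℝ) : ℝ :=
  (η - u) * u ^ 2 / 2

lemma contourRadius_pos {η u : ℝ} (h₀ : 0 < u) (huη : u < η) : 0 < contourRadius η u :=
  half_pos (mul_pos (sub_pos.mpr huη) (pow_pos h₀ 2))

lemma hasDerivAt_contourRadius (η u : ℝ) :
    HasDerivAt (contourRadius η) (u * (2 * η - 3 * u) / 2) u :=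
  ((((hasDerivAt_id' u).const_sub η).mul (hasDerivAt_pow 2 u)).div_const 2).congr_deriv (by
    push_cast; ring)

lemma Sred_eq_revolutionFun (η : ℝ) : Sred η = revolutionFun 2 (contourRadius η) := by
  funext p
  simp only [Sred, revolutionFun, contourRadius]
  ring

/-- Tangency condition for regular equilibria: for `K(u,v,w) = f(u) + c·v`,
`c ≠ 0`, and a sign `s = ±1`, the point `(u, s(η−u)u²/2, 0)` of `P^η` with
`0 < u < η` is an equilibrium of `X_K = ∇K × ∇S^η` iff
`f′(u) = −s·c·u(2η − 3u)/2`. -/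
theorem tangency_condition (η : ℝ) (hη : 0 < η)
    (f : ℝ → ℝ) (hf : Differentiable ℝ f) (c : ℝ) (hc : c ≠ 0)
    (s : ℝ) (hs : s = 1 ∨ s = -1) (u : ℝ) (h₀ : 0 < u) (huη : u < η) :
    cross3
        (grad3 (fun q => f q.1 + c * q.2.1) (u, s * (η - u) * u ^ 2 / 2, 0))
        (grad3 (Sred η) (u, s * (η - u) * u ^ 2 / 2, 0)) = 0
      ↔ deriv f u = -s * c * u * (2 * η - 3 * u) / 2 := by
  have hv : s * (η - u) * u ^ 2 / 2 = s * contourRadius η u := by unfold contourRadius; ring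
  have hslope : -s * c * u * (2 * η - 3 * u) / 2 = -s * c * (u * (2 * η - 3 * u) / 2) := by ring
  rw [hv, hslope, Sred_eq_revolutionFun]
  exact tangency_condition_general two_ne_zero hs (contourRadius_pos h₀ huη).ne'
    (hf u).hasDerivAt (hasDerivAt_const_mul c) (hasDerivAt_contourRadius η u)
end

section
/- Let η > 0, c ≠ 0, and let F : ℝ → ℝ be differentiable at 0 with F′(0) ≠ 0. Set K(u,v,w) = F(u) + c·v. Then there exists ρ > 0 such that the only point p = (u,v,w) ∈ P^η with ‖p‖ < ρ and K(p) = F(0) = K(Q₁) is p = Q₁ = (0,0,0). (Thus the short normal mode Q₁, sitting at the cusp singularity of P^η, is isolated in its own level set, hence stable, whenever the level curve of K passes through the origin with non-vanishing slope.) -/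
/-!
On the surface `Sred η p = 0` one has `v² + w² = ((η - u) u² / 2)²`, so `(v, w) = o(u)` at the
origin: the cusp is tangent to the `u`-axis. Hence, if `K` has derivative `K'` at the origin with
`K' (1, 0, 0) ≠ 0`, then `K (u, v, w) - K 0 ~ u K' (1, 0, 0)` along the surface. A point of the
surface close to the origin and on its level therefore has `u = 0`, and so is the origin.
-/

open Asymptotics Filter Topology

section Derivative

variable {𝕜 E G α : Type*} [NontriviallyNormedField 𝕜] [NormedAddCommGroup E] [NormedSpace 𝕜 E]
  [NormedAddCommGroup G] [NormedSpace 𝕜 G]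

theorem isEquivalent_sub_of_hasFDerivAt {f : E → G} {f' : E →L[𝕜] G} {x e : E} {l : Filter α}
    {γ : α → E} {t : α → 𝕜} (hf : HasFDerivAt f f' x) (he : f' e ≠ 0) (hγ : Tendsto γ l (𝓝 x))
    (hγt : (fun a ↦ γ a - x - t a • e) =o[l] t) :
    (fun a ↦ f (γ a) - f x) ~[l] fun a ↦ t a • f' e := by
  have displacement_isBigO : (fun a ↦ γ a - x) =O[l] t := by
    have smul_isBigO : (fun a ↦ t a • e) =O[l] t :=
      .of_bound ‖e‖ (.of_forall fun a ↦ by rw [norm_smul, mul_comm])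
    simpa only [sub_add_cancel] using hγt.isBigO.add smul_isBigO
  have remainder : (fun a ↦ f (γ a) - f x - f' (γ a - x)) =o[l] t :=
    (hf.isLittleO.comp_tendsto hγ).trans_isBigO displacement_isBigO
  have linear_part : (fun a ↦ f' (γ a - x) - t a • f' e) =o[l] t := by
    simpa only [map_sub, map_smul] using (f'.isBigO_comp _ l).trans_isLittleO hγt
  have isBigO_smul : t =O[l] fun a ↦ t a • f' e :=
    .of_bound ‖f' e‖⁻¹ (.of_forall fun a ↦ by
      rw [norm_smul, mul_comm ‖t a‖, inv_mul_cancel_left₀ (norm_ne_zero_iff.mpr he)])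
  have error_isLittleO : (fun a ↦ f (γ a) - f x - t a • f' e) =o[l] t := by
    simpa only [sub_add_sub_cancel] using remainder.add linear_part
  exact error_isLittleO.trans_isBigO isBigO_smul

end Derivative

section Surface

variable {η : ℝ} {p : ℝ × ℝ × ℝ}

theorem sq_add_sq_eq_of_Sred_eq_zero (hp : Sred η p = 0) :
    p.2.1 ^ 2 + p.2.2 ^ 2 = ((η - p.1) * p.1 ^ 2 / 2) ^ 2 := by
  unfold Sred at hp
  linarith

theorem norm_snd_le_of_Sred_eq_zero (hp : Sred η p = 0) :
    ‖p.2‖ ≤ ‖(η - p.1) * p.1 ^ 2 / 2‖ := by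
  have h := sq_add_sq_eq_of_Sred_eq_zero hp
  exact norm_prod_le_iff.mpr
    ⟨sq_le_sq.mp (h ▸ le_add_of_nonneg_right (sq_nonneg p.2.2)),
      sq_le_sq.mp (h ▸ le_add_of_nonneg_left (sq_nonneg p.2.1))⟩

theorem eq_zero_of_Sred_eq_zero_of_fst_eq_zero (hp : Sred η p = 0) (hu : p.1 = 0) : p = 0 :=
  Prod.ext hu <| norm_le_zero_iff.mp <| by simpa [hu] using norm_snd_le_of_Sred_eq_zero hp

theorem snd_isLittleO_fst_nhdsWithin_Sred (η : ℝ) :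
    (fun p : ℝ × ℝ × ℝ ↦ p.2) =o[𝓝[Sred η ⁻¹' {0}] 0] fun p ↦ p.1 := by
  have snd_isBigO : (fun p : ℝ × ℝ × ℝ ↦ p.2) =O[𝓝[Sred η ⁻¹' {0}] 0]
      fun p ↦ (η - p.1) * p.1 ^ 2 / 2 :=
    .of_bound' <| eventually_mem_nhdsWithin.mono fun _ hp ↦
      norm_snd_le_of_Sred_eq_zero hp
  have factor_tendsto : Tendsto (fun p : ℝ × ℝ × ℝ ↦ (η - p.1) * p.1 / 2) (𝓝 0) (𝓝 0) :=
    Continuous.tendsto' (by fun_prop) _ _ (by simp)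
  have bound_isLittleO : (fun p : ℝ × ℝ × ℝ ↦ (η - p.1) * p.1 ^ 2 / 2) =o[𝓝 0] fun p ↦ p.1 :=
    (((isLittleO_one_iff ℝ).mpr factor_tendsto).mul_isBigO (isBigO_refl Prod.fst (𝓝 0))).congr
      (fun p ↦ by ring) fun p ↦ one_mul p.1
  exact snd_isBigO.trans_isLittleO (bound_isLittleO.mono nhdsWithin_le_nhds)

variable {K : ℝ × ℝ × ℝ → ℝ} {K' : ℝ × ℝ × ℝ →L[ℝ] ℝ}

theorem sub_isEquivalent_fst_smul_nhdsWithin_Sred (η : ℝ) (hK : HasFDerivAt K K' 0)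
    (hK' : K' (1, 0, 0) ≠ 0) :
    (fun p ↦ K p - K 0) ~[𝓝[Sred η ⁻¹' {0}] 0] fun p ↦ p.1 • K' (1, 0, 0) := by
  refine isEquivalent_sub_of_hasFDerivAt hK hK' (tendsto_id.mono_left nhdsWithin_le_nhds) ?_
  have sub_axis (p : ℝ × ℝ × ℝ) : p - 0 - p.1 • ((1, 0, 0) : ℝ × ℝ × ℝ) = (0, p.2) := by
    ext <;> simp
  simpa only [id, sub_axis] using
    (isLittleO_zero _ _).prod_left (snd_isLittleO_fst_nhdsWithin_Sred η)

theorem short_mode_stable_general (η : ℝ) (hK : HasFDerivAt K K' 0) (hK' : K' (1, 0, 0) ≠ 0) :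
    ∃ ρ > 0, ∀ p : ℝ × ℝ × ℝ, Sred η p = 0 → ‖p‖ < ρ → K p = K 0 → p = 0 := by
  obtain ⟨ρ, hρ, hball⟩ := Metric.nhdsWithin_basis_ball.eventually_iff.mp
    (sub_isEquivalent_fst_smul_nhdsWithin_Sred η hK hK').isTheta.eq_zero_iff
  refine ⟨ρ, hρ, fun p hS hp hKp ↦ eq_zero_of_Sred_eq_zero_of_fst_eq_zero hS ?_⟩
  have hu : p.1 • K' (1, 0, 0) = 0 :=
    (hball ⟨mem_ball_zero_iff.mpr hp, hS⟩).mp (sub_eq_zero.mpr hKp)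
  exact (smul_eq_zero.mp hu).resolve_right hK'

end Surface

theorem hasFDerivAt_comp_fst_add_mul {F : ℝ → ℝ} {a : ℝ} (c : ℝ) {p : ℝ × ℝ × ℝ}
    (hF : HasDerivAt F a p.1) :
    HasFDerivAt (fun q : ℝ × ℝ × ℝ ↦ F q.1 + c * q.2.1)
      (a • .fst ℝ ℝ (ℝ × ℝ) + c • (ContinuousLinearMap.fst ℝ ℝ ℝ ∘L .snd ℝ ℝ (ℝ × ℝ))) p :=
  (hF.comp_hasFDerivAt p hasFDerivAt_fst).add ((hasFDerivAt_fst.comp p hasFDerivAt_snd).const_mul c)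

/-- Stability of the short normal mode `Q₁ = (0,0,0)` at the cusp of `P^η`:
if `K(u,v,w) = F(u) + c·v` with `c ≠ 0` and `F′(0) ≠ 0`, then `Q₁` is isolated
in its own level set `{K = K(Q₁)} ∩ P^η`. -/
theorem short_mode_stable (η : ℝ) (hη : 0 < η) (c : ℝ) (hc : c ≠ 0)
    (F : ℝ → ℝ) (hF : DifferentiableAt ℝ F 0) (hF' : deriv F 0 ≠ 0) :
    ∃ ρ > 0, ∀ p : ℝ × ℝ × ℝ, Sred η p = 0 → 0 ≤ p.1 → p.1 ≤ η →
      ‖p‖ < ρ → F p.1 + c * p.2.1 = F 0 → p = ((0 : ℝ), (0 : ℝ), (0 : ℝ)) := by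
  obtain ⟨ρ, hρ, isolated⟩ := short_mode_stable_general η
    (hasFDerivAt_comp_fst_add_mul c (p := 0) hF.hasDerivAt) (by simpa using hF')
  exact ⟨ρ, hρ, fun p hS _ _ hp hKp ↦ isolated p hS hp (by simpa using hKp)⟩
end
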